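/- arXiv:2105.10677 — 2 statements merged into one kernel-verified Lean document; each statement's English description precedes it below -/
import Mathlib

section
/- Let 1 ≤ p < q ≤ m with q − p > 1. Every unanimous and strategy-proof RSCF φ : [D_≺(p, q)]^n → Δ(A) defined on the full (p, q)-hybrid domain is a (p, q)-PFBR. -/
open Finset

noncomputable section

/-- A preference is a linear order over the `m` alternatives, represented as a bijection
from rank positions (0-based: position `0` is the top) to alternatives. -/
abbrev Pref (m : ℕ) := Fin m ≃ Fin m

namespace PFBRPaper

variable {m n : ℕ}

/-- `a` is strictly preferred to `b` under `P`. -/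
def Prefers (P : Pref m) (a b : Fin m) : Prop := P.symm a < P.symm b

/-- The last alternative `a_m` (0-based index `m-1`). -/
def lastAlt (m : ℕ) [NeZero m] : Fin m :=
  ⟨m - 1, Nat.sub_lt (Nat.pos_of_ne_zero (NeZero.ne m)) Nat.one_pos⟩

/-- Every alternative is top-ranked by some preference in the domain. -/
def MinimallyRich [NeZero m] (D : Set (Pref m)) : Prop :=
  ∀ a : Fin m, ∃ P ∈ D, P 0 = a

/-- The preference ranking `a_m` first, ..., `a_1` last. -/
def revPref (m : ℕ) : Pref m :=
  ⟨Fin.rev, Fin.rev, fun i => Fin.rev_rev i, fun i => Fin.rev_rev i⟩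

/-- Diversity, with the labeling convention: the domain contains the preference ranking
`a_1` first, `a_2` second, ..., `a_m` last (the identity), together with its
complete reversal. -/
def Diversity (D : Set (Pref m)) : Prop :=
  Equiv.refl (Fin m) ∈ D ∧ revPref m ∈ D

/-- Two preferences are adjacent: the alternatives at two contiguous rank positions are
swapped and everything else is unchanged. -/
def Adjacent (P P' : Pref m) : Prop :=
  P ≠ P' ∧ ∃ k : ℕ, ∃ hk : k + 1 < m,
    P ⟨k, Nat.lt_of_succ_lt hk⟩ = P' ⟨k + 1, hk⟩ ∧
    P ⟨k + 1, hk⟩ = P' ⟨k, Nat.lt_of_succ_lt hk⟩ ∧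
    ∀ l : Fin m, (l : ℕ) ≠ k → (l : ℕ) ≠ k + 1 → P l = P' l

/-- `π 0, …, π (v-1)` is a path in `D` connecting `P` and `P'`. -/
def IsPath (D : Set (Pref m)) (P P' : Pref m) (π : ℕ → Pref m) (v : ℕ) : Prop :=
  1 ≤ v ∧ (∀ i < v, π i ∈ D) ∧
  (∀ i < v, ∀ j < v, π i = π j → i = j) ∧
  π 0 = P ∧ π (v - 1) = P' ∧
  ∀ i, i + 1 < v → Adjacent (π i) (π (i + 1))

/-- The path `π 0, …, π (v-1)` has no `{a,b}`-restoration: the relative ranking of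
`a` and `b` switches at most once along the path. -/
def NoRestoration (π : ℕ → Pref m) (v : ℕ) (a b : Fin m) : Prop :=
  ∀ i j k : ℕ, i < j → j < k → k < v →
    ¬(Prefers (π i) a b ∧ Prefers (π j) b a ∧ Prefers (π k) a b) ∧
    ¬(Prefers (π i) b a ∧ Prefers (π j) a b ∧ Prefers (π k) b a)

def NoRestorationDomain (D : Set (Pref m)) : Prop :=
  ∀ P ∈ D, ∀ P' ∈ D, P ≠ P' → ∀ a b : Fin m,
    ∃ π v, IsPath D P P' π v ∧ NoRestoration π v a b

def RegularDomain [NeZero m] (D : Set (Pref m)) : Prop :=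
  MinimallyRich D ∧ Diversity D ∧ NoRestorationDomain D

/-- `a ≈ b`: the two alternatives are strongly connected in the domain `D`. -/
def StronglyConnected [NeZero m] (D : Set (Pref m)) (a b : Fin m) : Prop :=
  a ≠ b ∧ ∃ P ∈ D, ∃ P' ∈ D,
    P 0 = a ∧ P 1 = b ∧ P' 0 = b ∧ P' 1 = a ∧
    ∀ k : Fin m, 2 ≤ (k : ℕ) → P k = P' k

/-- `l` is a vertex-path of the graph `G_≈^B(D)`. -/
def IsVertexPathOn [NeZero m] (D : Set (Pref m)) (B : Set (Fin m)) (l : List (Fin m)) : Prop :=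
  l ≠ [] ∧ l.Nodup ∧ (∀ x ∈ l, x ∈ B) ∧ l.Chain' (StronglyConnected D)

/-- `l` is a vertex-path of `G_≈^B(D)` connecting `a` and `b`. -/
def VertexPathBetween [NeZero m] (D : Set (Pref m)) (B : Set (Fin m)) (a b : Fin m)
    (l : List (Fin m)) : Prop :=
  IsVertexPathOn D B l ∧ l.head? = some a ∧ l.getLast? = some b

/-- `a` is a leaf of the subgraph `G_≈^B(D)`. -/
def IsLeaf [NeZero m] (D : Set (Pref m)) (B : Set (Fin m)) (a : Fin m) : Prop :=
  a ∈ B ∧ ∃! b : Fin m, b ∈ B ∧ StronglyConnected D a b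

/-- Single-peakedness w.r.t. the natural order. -/
def SinglePeaked [NeZero m] (P : Pref m) : Prop :=
  ∀ a b : Fin m, ((a < b ∧ b < P 0) ∨ (P 0 < b ∧ b < a)) → Prefers P b a

/-- A `(p,q)`-hybrid preference (thresholds `p < q`, 0-based). -/
def IsHybridPref [NeZero m] (p q : Fin m) (P : Pref m) : Prop :=
  (∀ r s : Fin m, ((r ≤ p ∧ s ≤ p) ∨ (q ≤ r ∧ q ≤ s)) →
      ((r < s ∧ s < P 0) ∨ (P 0 < s ∧ s < r)) → Prefers P s r) ∧
  (P 0 ≤ p → ∀ l : Fin m, p ≤ l → l ≤ q → l ≠ p → Prefers P p l) ∧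
  (q ≤ P 0 → ∀ l : Fin m, p ≤ l → l ≤ q → l ≠ q → Prefers P q l)

/-- The `(p,q)`-hybrid domain of all `(p,q)`-hybrid preferences. -/
def hybridDomain [NeZero m] (p q : Fin m) : Set (Pref m) := {P | IsHybridPref p q P}

/-- `D` is a `(p,q)`-hybrid* domain. -/
def IsHybridStar [NeZero m] (D : Set (Pref m)) (p q : Fin m) : Prop :=
  D ⊆ hybridDomain p q ∧
  (∀ k : Fin m, k ≠ 0 → k ≠ lastAlt m →
      ∃ l, VertexPathBetween D Set.univ 0 (lastAlt m) l ∧ k ∈ l) ∧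
  ((p : ℕ) + 1 < (q : ℕ) → ∀ a : Fin m, ¬ IsLeaf D (Set.Icc p q) a)

/-- A lottery over the alternatives. -/
def Lottery (m : ℕ) : Type :=
  {f : Fin m → ℝ // (∀ a, 0 ≤ f a) ∧ ∑ a, f a = 1}

/-- The probability that a lottery assigns to a set of alternatives. -/
def Lottery.prob (lam : Lottery m) (B : Finset (Fin m)) : ℝ := ∑ a ∈ B, lam.1 a

/-- The support of a lottery. -/
def Lottery.supp (lam : Lottery m) : Finset (Fin m) :=
  Finset.univ.filter (fun a => 0 < lam.1 a)

/-- The degenerate lottery on `a`. -/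
def degLottery (a : Fin m) : Lottery m :=
  ⟨fun b => if b = a then 1 else 0,
   fun b => by by_cases h : b = a <;> simp [h],
   by simp⟩

/-- A profile of preferences drawn from the domain `D`. -/
abbrev Profile (D : Set (Pref m)) (n : ℕ) := Fin n → D

/-- The top-ranked alternative of a preference in the domain. -/
def topOf [NeZero m] {D : Set (Pref m)} (P : D) : Fin m := P.1 0

def Unanimous [NeZero m] {D : Set (Pref m)} (φ : Profile D n → Lottery m) : Prop :=
  ∀ (P : Profile D n) (a : Fin m), (∀ i, topOf (P i) = a) → φ P = degLottery a

/-- The total probability of the `k` top-ranked alternatives of `P` under `lam`. -/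
def topSum (lam : Lottery m) (P : Pref m) (k : ℕ) : ℝ :=
  ∑ t ∈ Finset.univ.filter (fun t : Fin m => (t : ℕ) < k), lam.1 (P t)

/-- Strategy-proofness: truth-telling first-order stochastically dominates any unilateral
misrepresentation. -/
def StrategyProof {D : Set (Pref m)} (φ : Profile D n → Lottery m) : Prop :=
  ∀ (i : Fin n) (P : Profile D n) (Pi' : D) (k : ℕ), k ≤ m →
    topSum (φ (Function.update P i Pi')) (P i).1 k ≤ topSum (φ P) (P i).1 k

def TopsOnly [NeZero m] {D : Set (Pref m)} (φ : Profile D n → Lottery m) : Prop :=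
  ∀ P P' : Profile D n, (∀ i, topOf (P i) = topOf (P' i)) → φ P = φ P'

def Anonymous {D : Set (Pref m)} (φ : Profile D n → Lottery m) : Prop :=
  ∀ (P : Profile D n) (σ : Equiv.Perm (Fin n)), φ (P ∘ σ) = φ P

/-- The interval `[a_k, a_m]`. -/
def upSet (k : Fin m) : Finset (Fin m) := Finset.univ.filter (fun a => k ≤ a)

/-- The interval `[a_1, a_k]`. -/
def downSet (k : Fin m) : Finset (Fin m) := Finset.univ.filter (fun a => a ≤ k)

/-- The interval `[a_p, a_q]`. -/
def midSet (p q : Fin m) : Finset (Fin m) := Finset.univ.filter (fun a => p ≤ a ∧ a ≤ q)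

/-- `S(k,P)`: the voters whose preference top is not to the left of `a_k`. -/
def voterSet [NeZero m] {D : Set (Pref m)} (P : Profile D n) (k : Fin m) : Finset (Fin n) :=
  Finset.univ.filter (fun i => k ≤ topOf (P i))

/-- `β_{S(k,P)}([a_k, a_m])`, with the convention that it is `0` for `k = m`. -/
def tailProb [NeZero m] {D : Set (Pref m)} (β : Finset (Fin n) → Lottery m)
    (P : Profile D n) (k : ℕ) : ℝ :=
  if h : k < m then (β (voterSet P ⟨k, h⟩)).prob (upSet ⟨k, h⟩) else 0

def BallotUnanimity [NeZero m] (β : Finset (Fin n) → Lottery m) : Prop :=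
  β Finset.univ = degLottery (lastAlt m) ∧ β ∅ = degLottery 0

def BallotMonotone (β : Finset (Fin n) → Lottery m) : Prop :=
  ∀ S T : Finset (Fin n), S ⊂ T →
    ∀ k : Fin m, (β S).prob (upSet k) ≤ (β T).prob (upSet k)

/-- `φ` is a probabilistic fixed ballot rule with probabilistic ballots `β`. -/
def IsPFBRWith [NeZero m] {D : Set (Pref m)} (φ : Profile D n → Lottery m)
    (β : Finset (Fin n) → Lottery m) : Prop :=
  BallotUnanimity β ∧ BallotMonotone β ∧
  ∀ (P : Profile D n) (k : Fin m),
    (φ P).1 k = tailProb β P (k : ℕ) - tailProb β P ((k : ℕ) + 1)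

def IsPFBR [NeZero m] {D : Set (Pref m)} (φ : Profile D n → Lottery m) : Prop :=
  ∃ β, IsPFBRWith φ β

/-- The constrained random-dictatorship condition w.r.t. `a_p` and `a_q`. -/
def ConstrainedRD (p q : Fin m) (β : Finset (Fin n) → Lottery m) : Prop :=
  ∃ ε : Fin n → ℝ, (∀ i, 0 ≤ ε i) ∧ ∑ i, ε i = 1 ∧
    ∀ S : Finset (Fin n),
      (β S).prob (upSet q) = ∑ i ∈ S, ε i ∧
      (β S).prob (downSet p) = ∑ i ∈ Sᶜ, ε i

/-- The constrained random-dictatorship condition w.r.t. `a_p` and `a_q` with every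
conditional dictatorial coefficient equal to `1/n`. -/
def ConstrainedRDUniform (p q : Fin m) (β : Finset (Fin n) → Lottery m) : Prop :=
  ∀ S : Finset (Fin n),
    (β S).prob (upSet q) = (S.card : ℝ) / (n : ℝ) ∧
    (β S).prob (downSet p) = ((Sᶜ : Finset (Fin n)).card : ℝ) / (n : ℝ)

/-- Anonymity at the level of probabilistic ballots. -/
def BallotAnonymous (β : Finset (Fin n) → Lottery m) : Prop :=
  ∀ S S' : Finset (Fin n), S.Nonempty → S'.Nonempty → S.card = S'.card → β S = β S'

/-- Per-capita monotonicity w.r.t. `a_p` and `a_q`. -/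
def PerCapitaMonotone (p q : Fin m) (β : Finset (Fin n) → Lottery m) : Prop :=
  ∀ S S' : Finset (Fin n), S.Nonempty → S ⊂ S' → S' ⊂ Finset.univ →
    (∀ t : Fin m, q ≤ t →
      (β S).prob (upSet t) / (S.card : ℝ) ≤ (β S').prob (upSet t) / (S'.card : ℝ)) ∧
    (∀ s : Fin m, s ≤ p →
      (β Sᶜ).prob (downSet s) / (S.card : ℝ) ≤ (β S'ᶜ).prob (downSet s) / (S'.card : ℝ))

/-- Decomposability: `φ` is a mixture of finitely many unanimous and strategy-proof
deterministic social choice functions. -/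
def Decomposable [NeZero m] {D : Set (Pref m)} (φ : Profile D n → Lottery m) : Prop :=
  ∃ (r : ℕ) (f : Fin r → (Profile D n → Fin m)) (α : Fin r → ℝ),
    (∀ k, 0 < α k) ∧ ∑ k, α k = 1 ∧
    (∀ k, Unanimous (fun P => degLottery (f k P)) ∧
          StrategyProof (fun P => degLottery (f k P))) ∧
    ∀ (P : Profile D n) (a : Fin m),
      (φ P).1 a = ∑ k, α k * (if f k P = a then 1 else 0)

/-- `b̂_S^R`: the `≺`-minimum of `supp(β_S) ∩ R` (with the convention `b̂_N^R = a_m`). -/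
def bR [NeZero m] (β : Finset (Fin n) → Lottery m) (q : Fin m) (S : Finset (Fin n)) : Fin m :=
  if h : ((β S).supp ∩ upSet q).Nonempty then ((β S).supp ∩ upSet q).min' h else lastAlt m

/-- `b̂_S^L`: the `≺`-maximum of `supp(β_S) ∩ L` (with the convention `b̂_∅^L = a_1`). -/
def bL [NeZero m] (β : Finset (Fin n) → Lottery m) (p : Fin m) (S : Finset (Fin n)) : Fin m :=
  if h : ((β S).supp ∩ downSet p).Nonempty then ((β S).supp ∩ downSet p).max' h else 0

/-- `α = min over nonempty S ⊂ N of min(β_S(b̂_S^R)/|S|, β_S(b̂_S^L)/(n-|S|))`. -/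
def alphaVal [NeZero m] (β : Finset (Fin n) → Lottery m) (p q : Fin m) : ℝ :=
  sInf {x : ℝ | ∃ S : Finset (Fin n), S.Nonempty ∧ S ≠ Finset.univ ∧
    x = min ((β S).1 (bR β q S) / (S.card : ℝ))
            ((β S).1 (bL β p S) / ((n : ℝ) - (S.card : ℝ)))}

/-- `γ_S = (|S|/n) e_{b̂_S^R} + ((n-|S|)/n) e_{b̂_S^L}`, pointwise. -/
def gammaFun [NeZero m] (β : Finset (Fin n) → Lottery m) (p q : Fin m)
    (S : Finset (Fin n)) (a : Fin m) : ℝ :=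
  ((S.card : ℝ) / (n : ℝ)) * (if a = bR β q S then 1 else 0)
  + (((n : ℝ) - (S.card : ℝ)) / (n : ℝ)) * (if a = bL β p S then 1 else 0)

/-- The max-min formula `f(P) = max_{S ⊆ N} min({r_1(P_j) : j ∈ S} ∪ {b_S})`. -/
def fbrOutcome [NeZero m] {D : Set (Pref m)} (b : Finset (Fin n) → Fin m)
    (P : Profile D n) : Fin m :=
  Finset.univ.sup' Finset.univ_nonempty
    (fun S : Finset (Fin n) =>
      (insert (b S) (S.image (fun j => topOf (P j)))).inf' (Finset.insert_nonempty _ _) id)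

/-- `f` is a `(p,q)`-fixed ballot rule with deterministic ballots `b` and constrained
dictator `i`. -/
def IsFBRWith [NeZero m] {D : Set (Pref m)} (p q : Fin m) (f : Profile D n → Fin m)
    (b : Finset (Fin n) → Fin m) (i : Fin n) : Prop :=
  b Finset.univ = lastAlt m ∧ b ∅ = 0 ∧
  (∀ S T : Finset (Fin n), S ⊂ T → b S ≤ b T) ∧
  (∀ S : Finset (Fin n), (i ∈ S → q ≤ b S) ∧ (i ∉ S → b S ≤ p)) ∧
  ∀ P : Profile D n, f P = fbrOutcome b P

end PFBRPaper

open PFBRPaper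

/-!
Join `a_1, …, a_m` by a path and add all chords inside `[a_p, a_q]`. A preference is hybrid iff
every alternative separating its top from `a_r` in this graph is preferred to `a_r`. On the domain
that any graph defines in this way, unanimity and strategy-proofness imply tops-onlyness: changing
the preferences of other voters without changing a common upper contour set containing `x` but not
`y` does not affect whether swapping the neighbours `x` and `y` matters, and such changes suffice to
bring all other voters to one of the two swapped preferences, where unanimity decides.

The rule is then a function of the votes, and moving votes into `U` can only raise the probability
of `U` whenever `U` is an upper contour set of preferences with each of its members on top. This
holds for intervals, which makes the rule a probabilistic fixed ballot rule with the outcomes at the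
profiles voting in `{a_1, a_m}` as ballots, and for `{a_p, a_q}`, which makes
`S ↦ β_S([a_q, a_m])` additive.
-/


namespace PFBRPaper

variable {m n : ℕ}

/-! ### Preferences and upper contour sets -/

lemma Prefers.trans {P : Pref m} {a b c : Fin m} (hab : Prefers P a b) (hbc : Prefers P b c) :
    Prefers P a c :=
  lt_trans hab hbc

lemma Prefers.asymm {P : Pref m} {a b : Fin m} (hab : Prefers P a b) : ¬ Prefers P b a :=
  lt_asymm hab

lemma Prefers.ne {P : Pref m} {a b : Fin m} (hab : Prefers P a b) : a ≠ b := by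
  rintro rfl
  exact hab.asymm hab

lemma prefers_or_prefers_of_ne (P : Pref m) {a b : Fin m} (hab : a ≠ b) :
    Prefers P a b ∨ Prefers P b a :=
  lt_or_gt_of_ne (P.symm.injective.ne hab)

instance (P : Pref m) : DecidableRel (Prefers P) := fun a b =>
  inferInstanceAs (Decidable (P.symm a < P.symm b))

lemma top_eq_iff [NeZero m] (P : Pref m) (a : Fin m) :
    P 0 = a ↔ ∀ b, b ≠ a → Prefers P a b := by
  constructor
  · rintro rfl b hb
    rw [Prefers, Equiv.symm_apply_apply, Fin.pos_iff_ne_zero, ne_eq, Equiv.symm_apply_eq]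
    exact hb
  · intro h
    by_contra hne
    have hlt := h _ hne
    rw [Prefers, Equiv.symm_apply_apply] at hlt
    exact Fin.not_lt_zero _ hlt

lemma prefers_top [NeZero m] (P : Pref m) {b : Fin m} (hb : b ≠ P 0) : Prefers P (P 0) b :=
  (top_eq_iff P _).1 rfl b hb

lemma Prefers.ne_top [NeZero m] {P : Pref m} {a b : Fin m} (hab : Prefers P a b) : b ≠ P 0 := by
  rintro rfl
  exact hab.asymm (prefers_top P hab.ne)

/-- The preference that ranks alternatives by increasing value of the injective function `f`. -/
def prefOf {α : Type*} [LinearOrder α] (f : Fin m → α) : Pref m := Tuple.sort f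

lemma prefers_prefOf {α : Type*} [LinearOrder α] {f : Fin m → α} (hf : Function.Injective f)
    (a b : Fin m) : Prefers (prefOf f) a b ↔ f a < f b := by
  have hmono : StrictMono (f ∘ Tuple.sort f) :=
    (Tuple.monotone_sort f).strictMono_of_injective (hf.comp (Tuple.sort f).injective)
  rw [Prefers, ← hmono.lt_iff_lt]
  simp [prefOf]

/-- `U` is an upper contour set of `P`, i.e. a set consisting of the `#U` best alternatives. -/
def IsUpper (P : Pref m) (U : Finset (Fin m)) : Prop := ∀ a ∈ U, ∀ b ∉ U, Prefers P a b

/-- The alternatives that `P` ranks weakly above `a`. -/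
def upperContour (P : Pref m) (a : Fin m) : Finset (Fin m) :=
  univ.filter fun b => P.symm b ≤ P.symm a

lemma mem_upperContour {P : Pref m} {a b : Fin m} :
    b ∈ upperContour P a ↔ P.symm b ≤ P.symm a := by
  simp [upperContour]

lemma self_mem_upperContour (P : Pref m) (a : Fin m) : a ∈ upperContour P a :=
  mem_upperContour.2 le_rfl

lemma notMem_upperContour {P : Pref m} {a b : Fin m} :
    b ∉ upperContour P a ↔ Prefers P a b := by
  rw [mem_upperContour, not_le, Prefers]

lemma isUpper_upperContour (P : Pref m) (a : Fin m) : IsUpper P (upperContour P a) :=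
  fun _ hb _ hc => (mem_upperContour.1 hb).trans_lt (notMem_upperContour.1 hc)

lemma mem_upperContour_erase {P : Pref m} {a b : Fin m} :
    b ∈ (upperContour P a).erase a ↔ Prefers P b a := by
  rw [mem_erase, mem_upperContour, Prefers, lt_iff_le_and_ne, P.symm.injective.ne_iff, and_comm]

lemma isUpper_upperContour_erase (P : Pref m) (a : Fin m) :
    IsUpper P ((upperContour P a).erase a) := by
  intro b hb c hc
  rw [mem_upperContour_erase] at hb hc
  exact lt_of_lt_of_le hb (not_lt.1 hc)

/-! ### Lotteries and strategy-proofness -/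

lemma Lottery.prob_univ (lam : Lottery m) : lam.prob univ = 1 := lam.2.2

lemma Lottery.prob_compl (lam : Lottery m) (U : Finset (Fin m)) : lam.prob Uᶜ = 1 - lam.prob U := by
  rw [eq_sub_iff_add_eq, Lottery.prob, Lottery.prob, sum_compl_add_sum, lam.2.2]

lemma prob_degLottery (a : Fin m) (U : Finset (Fin m)) :
    (degLottery a).prob U = if a ∈ U then 1 else 0 := by
  simp [Lottery.prob, degLottery]

lemma Lottery.prob_erase (lam : Lottery m) {U : Finset (Fin m)} {a : Fin m} (ha : a ∈ U) :
    lam.prob (U.erase a) = lam.prob U - lam.1 a :=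
  sum_erase_eq_sub ha

lemma topSum_card_eq_prob (lam : Lottery m) {P : Pref m} {U : Finset (Fin m)} (hU : IsUpper P U) :
    topSum lam P #U = lam.prob U := by
  have hranks : U.map P.symm.toEmbedding = univ.filter fun t : Fin m => (t : ℕ) < #U := by
    refine eq_of_subset_of_card_le (fun t ht => ?_) (by simp [Fin.card_filter_val_lt])
    obtain ⟨a, ha, rfl⟩ := mem_map.1 ht
    have hsub : (Iic (P.symm a)).map P.toEmbedding ⊆ U := by
      intro b hb
      by_contra hbU
      obtain ⟨s, hs, rfl⟩ := mem_map.1 hb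
      have hlt := hU a ha _ hbU
      rw [Prefers, Equiv.coe_toEmbedding, Equiv.symm_apply_apply] at hlt
      exact (mem_Iic.1 hs).not_gt hlt
    have hcard := card_le_card hsub
    rw [card_map, Fin.card_Iic] at hcard
    simpa using hcard
  rw [topSum, ← hranks, sum_map]
  simp [Lottery.prob]

section StrategyProof

variable {D : Set (Pref m)} {φ : Profile D n → Lottery m}

lemma StrategyProof.prob_update_le (hsp : StrategyProof φ) (P : Profile D n) (i : Fin n) (d : D)
    {U : Finset (Fin m)} (hU : IsUpper (P i).1 U) :
    (φ (Function.update P i d)).prob U ≤ (φ P).prob U := by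
  rw [← topSum_card_eq_prob _ hU, ← topSum_card_eq_prob _ hU]
  exact hsp i P d _ (by simpa using card_le_univ U)

lemma StrategyProof.prob_update_congr (hsp : StrategyProof φ) (P : Profile D n) (i : Fin n)
    {d d' : D} {U : Finset (Fin m)} (hd : IsUpper d.1 U) (hd' : IsUpper d'.1 U) :
    (φ (Function.update P i d)).prob U = (φ (Function.update P i d')).prob U := by
  apply le_antisymm
  · simpa using hsp.prob_update_le (Function.update P i d') i d (by simpa using hd')
  · simpa using hsp.prob_update_le (Function.update P i d) i d' (by simpa using hd)

end StrategyProof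

lemma rel_of_forall_rel_update {D X : Type*} {F : (Fin n → D) → X} (r : X → X → Prop)
    [Std.Refl r] [IsTrans X r] {R : D → D → Prop}
    (hstep : ∀ P i d, R (P i) d → r (F P) (F (Function.update P i d)))
    {P P' : Fin n → D} (h : ∀ i, R (P i) (P' i)) : r (F P) (F P') := by
  have hpiecewise (S : Finset (Fin n)) : r (F P) (F (S.piecewise P' P)) := by
    induction S using Finset.induction_on with
    | empty => simpa using refl_of r _
    | insert i S hi ih =>
      rw [piecewise_insert]
      exact trans_of r ih (hstep _ i _ (by simpa [hi] using h i))
  simpa using hpiecewise univ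

/-! ### Swaps of two neighbouring alternatives -/

/-- `B` arises from `A` by exchanging the neighbours `x` and `y`, of which `A` prefers `x`. -/
def IsSwap (A B : Pref m) (x y : Fin m) : Prop :=
  Prefers A x y ∧ Prefers B y x ∧
    ∀ a b, ¬ (a = x ∧ b = y) → ¬ (a = y ∧ b = x) → (Prefers A a b ↔ Prefers B a b)

namespace IsSwap

variable {A B : Pref m} {x y : Fin m}

lemma symm (h : IsSwap A B x y) : IsSwap B A y x :=
  ⟨h.2.1, h.1, fun a b hyx hxy => (h.2.2 a b hxy hyx).symm⟩

lemma not_between (h : IsSwap A B x y) (z : Fin m) : ¬ (Prefers A x z ∧ Prefers A z y) := by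
  rintro ⟨hxz, hzy⟩
  have hxz' := (h.2.2 x z (by simp [hzy.ne]) (by simp [h.1.ne])).1 hxz
  have hzy' := (h.2.2 z y (by simp [hxz.ne.symm]) (by simp [h.1.ne.symm])).1 hzy
  exact h.2.1.asymm (hxz'.trans hzy')

lemma isUpper (h : IsSwap A B x y) {U : Finset (Fin m)} (hU : IsUpper A U)
    (hxy : ¬ (x ∈ U ∧ y ∉ U)) : IsUpper B U := by
  intro a ha b hb
  refine (h.2.2 a b ?_ ?_).1 (hU a ha b hb)
  · rintro ⟨rfl, rfl⟩
    exact hxy ⟨ha, hb⟩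
  · rintro ⟨rfl, rfl⟩
    exact h.1.asymm (hU _ ha _ hb)

end IsSwap

/-- The ordered pairs on which `A` and `B` disagree. -/
def inversions (A B : Pref m) : Finset (Fin m × Fin m) :=
  univ.filter fun t => Prefers A t.1 t.2 ∧ Prefers B t.2 t.1

lemma mem_inversions {A B : Pref m} {a b : Fin m} :
    (a, b) ∈ inversions A B ↔ Prefers A a b ∧ Prefers B b a := by
  simp [inversions]

lemma isSwap_swap_trans {k : ℕ} (A : Pref (k + 1)) (i : Fin k) :
    IsSwap A ((Equiv.swap i.castSucc i.succ).trans A) (A i.castSucc) (A i.succ) := by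
  refine ⟨by simp [Prefers], by simp [Prefers], fun a b hxy hyx => ?_⟩
  obtain ⟨u, rfl⟩ := A.surjective a
  obtain ⟨v, rfl⟩ := A.surjective b
  simp only [EmbeddingLike.apply_eq_iff_eq, Fin.ext_iff, Fin.val_castSucc, Fin.val_succ] at hxy hyx
  simp only [Prefers, Equiv.symm_trans_apply, Equiv.symm_apply_apply, Equiv.symm_swap,
    Equiv.swap_apply_def, Fin.ext_iff, Fin.val_castSucc, Fin.val_succ]
  split_ifs <;> simp only [Fin.lt_def, Fin.val_castSucc, Fin.val_succ] <;> omega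

lemma exists_isSwap_of_ne {A B : Pref m} (hAB : A ≠ B) :
    ∃ x y A', IsSwap A A' x y ∧ Prefers B y x := by
  obtain _ | k := m
  · exact absurd (Subsingleton.elim A B) hAB
  by_contra! hno
  have hmono : StrictMono (A.trans B.symm) := Fin.strictMono_iff_lt_succ.2 fun i =>
    ((prefers_or_prefers_of_ne B (A.injective.ne Fin.castSucc_lt_succ.ne)).resolve_right
      (hno _ _ _ (isSwap_swap_trans A i)))
  have hid : ⇑(A.trans B.symm) = id :=
    (hmono.range_inj strictMono_id).1 (by rw [Set.range_id, (A.trans B.symm).range_eq_univ])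
  exact hAB (Equiv.ext fun i => (Equiv.symm_apply_eq B).1 (congrFun hid i))

lemma IsSwap.inversions_ssubset {A A' B : Pref m} {x y : Fin m} (h : IsSwap A A' x y)
    (hB : Prefers B y x) : inversions A' B ⊂ inversions A B := by
  refine Finset.ssubset_iff_of_subset ?_ |>.2 ⟨(x, y), mem_inversions.2 ⟨h.1, hB⟩, fun hxy =>
    h.2.1.asymm (mem_inversions.1 hxy).1⟩
  rintro ⟨a, b⟩ hab
  obtain ⟨hA', hB'⟩ := mem_inversions.1 hab
  refine mem_inversions.2 ⟨(h.2.2 a b ?_ ?_).2 hA', hB'⟩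
  · rintro ⟨rfl, rfl⟩
    exact hA'.asymm h.2.1
  · rintro ⟨rfl, rfl⟩
    exact hB'.asymm hB

section SwapEffect

variable {D : Set (Pref m)} {φ : Profile D n → Lottery m} {A B : D} {x y : Fin m}

lemma StrategyProof.apply_update_eq_of_isSwap (hsp : StrategyProof φ) (h : IsSwap A.1 B.1 x y)
    (Q : Profile D n) (i : Fin n) {z : Fin m} (hzx : z ≠ x) (hzy : z ≠ y) :
    (φ (Function.update Q i A)).1 z = (φ (Function.update Q i B)).1 z := by
  have hweak := h.isUpper (isUpper_upperContour A.1 z) fun ⟨hx, hy⟩ =>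
    h.not_between z ⟨mem_upperContour_erase.1 (mem_erase.2 ⟨hzx.symm, hx⟩),
      notMem_upperContour.1 hy⟩
  have hstrict := h.isUpper (isUpper_upperContour_erase A.1 z) fun ⟨hx, hy⟩ =>
    h.not_between z ⟨mem_upperContour_erase.1 hx,
      notMem_upperContour.1 fun hy' => hy (mem_erase.2 ⟨hzy.symm, hy'⟩)⟩
  have hprob := hsp.prob_update_congr Q i (isUpper_upperContour A.1 z) hweak
  have hprob_erase := hsp.prob_update_congr Q i (isUpper_upperContour_erase A.1 z) hstrict
  rw [Lottery.prob_erase _ (self_mem_upperContour _ _),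
    Lottery.prob_erase _ (self_mem_upperContour _ _)] at hprob_erase
  linarith

lemma eq_of_prob_eq_of_forall_ne {lam mu : Lottery m} {U : Finset (Fin m)} (hx : x ∈ U)
    (hy : y ∉ U) (hoff : ∀ z, z ≠ x → z ≠ y → lam.1 z = mu.1 z) (hU : lam.prob U = mu.prob U) :
    lam = mu := by
  have happly_x : lam.1 x = mu.1 x := by
    have hrest : lam.prob (U.erase x) = mu.prob (U.erase x) := sum_congr rfl fun z hz =>
      hoff z (ne_of_mem_erase hz) (ne_of_mem_of_not_mem (mem_of_mem_erase hz) hy)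
    rw [Lottery.prob_erase _ hx, Lottery.prob_erase _ hx] at hrest
    linarith
  have happly (z : Fin m) (hzy : z ≠ y) : lam.1 z = mu.1 z := by
    obtain rfl | hzx := eq_or_ne z x
    exacts [happly_x, hoff z hzx hzy]
  have happly_y : lam.1 y = mu.1 y := by
    have hrest : lam.prob (univ.erase y) = mu.prob (univ.erase y) := sum_congr rfl fun z hz =>
      happly z (ne_of_mem_erase hz)
    rw [Lottery.prob_erase _ (mem_univ y), Lottery.prob_erase _ (mem_univ y), Lottery.prob_univ,
      Lottery.prob_univ] at hrest
    linarith
  refine Subtype.ext (funext fun z => ?_)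
  obtain rfl | hzy := eq_or_ne z y
  exacts [happly_y, happly z hzy]

lemma StrategyProof.update_eq_iff_of_isSwap (hsp : StrategyProof φ) (h : IsSwap A.1 B.1 x y)
    (Q : Profile D n) (i : Fin n) {U : Finset (Fin m)} (hx : x ∈ U) (hy : y ∉ U) :
    φ (Function.update Q i A) = φ (Function.update Q i B) ↔
      (φ (Function.update Q i A)).prob U = (φ (Function.update Q i B)).prob U :=
  ⟨fun heq => by rw [heq], eq_of_prob_eq_of_forall_ne hx hy fun _ hzx hzy =>
    hsp.apply_update_eq_of_isSwap h Q i hzx hzy⟩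

end SwapEffect

/-! ### Tops-onlyness across a swap -/

section PairConnected

variable {D : Set (Pref m)} {φ : Profile D n → Lottery m}

/-- `P` and `Q` have a common upper contour set containing `x` but not `y`. Passing from `P` to `Q`
then leaves the probability of that set unchanged under every strategy-proof rule. -/
def SharesCut (x y : Fin m) (P Q : D) : Prop :=
  ∃ U : Finset (Fin m), x ∈ U ∧ y ∉ U ∧ IsUpper P.1 U ∧ IsUpper Q.1 U

/-- Any two preferences of `D` that agree on `x` over `y` are joined by a chain of preferences
in which neighbours share a cut between `x` and `y`. -/
def PairConnected (D : Set (Pref m)) : Prop :=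
  ∀ (x y : Fin m) (P Q : D), Prefers P.1 x y → Prefers Q.1 x y →
    Relation.EqvGen (SharesCut x y) P Q

lemma StrategyProof.update_eq_iff_of_eqvGen_sharesCut (hsp : StrategyProof φ) {A B d d' : D}
    {x y : Fin m} (h : IsSwap A.1 B.1 x y) (hd : Relation.EqvGen (SharesCut x y) d d')
    (Q : Profile D n) (i j : Fin n) :
    (φ (Function.update (Function.update Q j d) i A) =
        φ (Function.update (Function.update Q j d) i B)) ↔
      (φ (Function.update (Function.update Q j d') i A) =
        φ (Function.update (Function.update Q j d') i B)) := by
  obtain rfl | hij := eq_or_ne i j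
  · simp only [Function.update_idem]
  induction hd with
  | rel d d' hcut =>
    obtain ⟨U, hx, hy, hU, hU'⟩ := hcut
    have hshift (C : D) : (φ (Function.update (Function.update Q j d) i C)).prob U =
        (φ (Function.update (Function.update Q j d') i C)).prob U := by
      rw [Function.update_comm hij.symm, Function.update_comm hij.symm]
      exact hsp.prob_update_congr _ _ hU hU'
    rw [hsp.update_eq_iff_of_isSwap h _ _ hx hy, hsp.update_eq_iff_of_isSwap h _ _ hx hy,
      hshift A, hshift B]
  | refl d => rfl
  | symm d d' _ ih => exact ih.symm
  | trans d d' d'' _ _ ih ih' => exact ih.trans ih'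

/-- Every other voter can be moved, along shared cuts, to `A` or to `B`; there the two outcomes
agree by unanimity. -/
lemma Unanimous.update_eq_of_isSwap [NeZero m] (hu : Unanimous φ) (hsp : StrategyProof φ)
    (hD : PairConnected D) {A B : D} {x y : Fin m} (h : IsSwap A.1 B.1 x y)
    (htop : topOf A = topOf B) (Q : Profile D n) (i : Fin n) :
    φ (Function.update Q i A) = φ (Function.update Q i B) := by
  let target (j : Fin n) : D := if Prefers (Q j).1 x y then A else B
  have htarget (j : Fin n) : topOf (target j) = topOf A := by
    dsimp only [target]
    split_ifs
    exacts [rfl, htop.symm]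
  have hiff : (φ (Function.update Q i A) = φ (Function.update Q i B)) ↔
      (φ (Function.update target i A) = φ (Function.update target i B)) := by
    refine rel_of_forall_rel_update Iff
      (F := fun Q : Profile D n => φ (Function.update Q i A) = φ (Function.update Q i B))
      (R := fun d d' => Relation.EqvGen (SharesCut x y) d d' ∨
        Relation.EqvGen (SharesCut y x) d d') (fun Q j d hd => ?_) (fun j => ?_)
    · obtain hd | hd := hd
      · simpa using hsp.update_eq_iff_of_eqvGen_sharesCut h hd Q i j
      · simpa [eq_comm] using hsp.update_eq_iff_of_eqvGen_sharesCut h.symm hd Q i j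
    · dsimp only [target]
      split_ifs with hxy
      · exact .inl (hD x y _ _ hxy h.1)
      · exact .inr (hD y x _ _
          ((prefers_or_prefers_of_ne (Q j).1 h.1.ne).resolve_left hxy) h.2.1)
  have hunanimous {C : D} (hC : topOf C = topOf A) :
      φ (Function.update target i C) = degLottery (topOf A) := by
    refine hu _ _ fun j => ?_
    obtain rfl | hj := eq_or_ne j i
    · simpa using hC
    · simpa [hj] using htarget j
  rw [hiff, hunanimous rfl, hunanimous htop.symm]

end PairConnected

/-! ### The domain of preferences respecting the separators of a graph -/

/-- The preference that puts the members of `W` first and otherwise ranks as `P` does. -/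
def moveToFront (P : Pref m) (W : Finset (Fin m)) : Pref m :=
  prefOf fun a => toLex (decide (a ∉ W), P.symm a)

section MoveToFront

variable {P : Pref m} {U W : Finset (Fin m)}

lemma prefers_moveToFront {a b : Fin m} : Prefers (moveToFront P W) a b ↔
    (a ∈ W ∧ b ∉ W) ∨ ((a ∈ W ↔ b ∈ W) ∧ Prefers P a b) := by
  have hinj : Function.Injective fun a : Fin m => toLex (decide (a ∉ W), P.symm a) :=
    fun a b hab => P.symm.injective (congrArg Prod.snd (toLex.injective hab))
  rw [moveToFront, prefers_prefOf hinj, Prod.Lex.toLex_lt_toLex]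
  by_cases ha : a ∈ W <;> by_cases hb : b ∈ W <;> simp [ha, hb, Prefers]

lemma isUpper_moveToFront (P : Pref m) (W : Finset (Fin m)) : IsUpper (moveToFront P W) W :=
  fun _ ha _ hb => prefers_moveToFront.2 (.inl ⟨ha, hb⟩)

lemma IsUpper.moveToFront (hU : IsUpper P U) (hUW : U ⊆ W ∨ W ⊆ U) :
    IsUpper (moveToFront P W) U := by
  intro a ha b hb
  have hab := hU a ha b hb
  rw [prefers_moveToFront]
  grind

variable [NeZero m]

lemma top_mem_upperContour (P : Pref m) (a : Fin m) : P 0 ∈ upperContour P a := by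
  simp [mem_upperContour]

lemma moveToFront_top (hW : P 0 ∈ W) : moveToFront P W 0 = P 0 := by
  refine (top_eq_iff _ _).2 fun b hb => prefers_moveToFront.2 ?_
  have hpref := prefers_top P hb
  tauto

lemma moveToFront_singleton_top (P : Pref m) (a : Fin m) : moveToFront P {a} 0 = a :=
  (top_eq_iff _ _).2 fun b hb => prefers_moveToFront.2 (by simp [hb])

end MoveToFront

/-- Every walk from `a` to `r` passes through `s`, where `s` may be one of the endpoints. -/
def Separates {V : Type*} (G : SimpleGraph V) (s a r : V) : Prop :=
  ∀ w : G.Walk a r, s ∈ w.support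

/-- `W` contains every separator between `a` and a member of `W`. -/
def SeparatorClosed {V : Type*} (G : SimpleGraph V) (a : V) (W : Finset V) : Prop :=
  ∀ r ∈ W, ∀ s, Separates G s a r → s ∈ W

lemma Separates.symm {V : Type*} {G : SimpleGraph V} {s a r : V} (h : Separates G s a r) :
    Separates G s r a := fun w => by
  simpa using h w.reverse

lemma Separates.of_adj {V : Type*} {G : SimpleGraph V} {s a b r : V} (h : Separates G s b r)
    (hab : G.Adj a b) (hs : s ≠ b) : Separates G s a r := fun w => by
  simpa [hs] using h (.cons hab.symm w)

lemma SeparatorClosed.union {V : Type*} [DecidableEq V] {G : SimpleGraph V} {a : V}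
    {U W : Finset V} (hU : SeparatorClosed G a U) (hW : SeparatorClosed G a W) :
    SeparatorClosed G a (U ∪ W) := by
  intro r hr s hs
  rw [mem_union] at hr ⊢
  exact hr.imp (hU r · s hs) (hW r · s hs)

lemma separatorClosed_pair {V : Type*} [DecidableEq V] {G : SimpleGraph V} {a b : V}
    (hab : G.Adj a b) : SeparatorClosed G a {a, b} := by
  intro r hr s hs
  obtain rfl | rfl : r = a ∨ r = b := by simpa using hr
  · simpa using Or.inl (hs .nil)
  · simpa using hs hab.toWalk

/-- The preferences under which every alternative separating the top from `r` beats `r`. -/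
def separationDomain [NeZero m] (G : SimpleGraph (Fin m)) : Set (Pref m) :=
  {P | ∀ s r, s ≠ r → Separates G s (P 0) r → Prefers P s r}

section SeparationDomain

variable [NeZero m] {G : SimpleGraph (Fin m)}

lemma IsUpper.separatorClosed {P : Pref m} (hP : P ∈ separationDomain G) {U : Finset (Fin m)}
    (hU : IsUpper P U) : SeparatorClosed G (P 0) U := by
  intro r hr s hs
  by_contra hsU
  exact (hU r hr s hsU).asymm (hP s r (ne_of_mem_of_not_mem hr hsU).symm hs)

lemma moveToFront_mem_separationDomain {P : Pref m} (hP : P ∈ separationDomain G)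
    {W : Finset (Fin m)} (htop : P 0 ∈ W) (hW : SeparatorClosed G (P 0) W) :
    moveToFront P W ∈ separationDomain G := by
  intro s r hsr hs
  rw [moveToFront_top htop] at hs
  have hpref := hP s r hsr hs
  have hclosed := fun hr => hW r hr s hs
  rw [prefers_moveToFront]
  tauto

lemma moveToFront_singleton_mem_separationDomain {P : Pref m} (hP : P ∈ separationDomain G)
    {c : Fin m} (hc : G.Adj (P 0) c) : moveToFront P {c} ∈ separationDomain G := by
  intro s r hsr hs
  rw [moveToFront_singleton_top] at hs
  rw [prefers_moveToFront]
  obtain rfl | hsc := eq_or_ne s c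
  · simp [hsr.symm]
  · have hrc : r ≠ c := by
      rintro rfl
      simpa [hsc] using hs .nil
    simp [hsc, hrc, hP s r hsr (hs.of_adj hc hsc)]

lemma mem_separationDomain_of_between {A B C : Pref m} (hA : A ∈ separationDomain G)
    (hB : B ∈ separationDomain G) (htop : A 0 = B 0)
    (hC : ∀ s r, Prefers A s r → Prefers B s r → Prefers C s r) :
    C ∈ separationDomain G ∧ C 0 = A 0 := by
  have hCtop : C 0 = A 0 := (top_eq_iff _ _).2 fun b hb =>
    hC _ _ (prefers_top A hb) (htop ▸ prefers_top B (htop ▸ hb))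
  refine ⟨fun s r hsr hs => ?_, hCtop⟩
  rw [hCtop] at hs
  exact hC s r (hA s r hsr hs) (hB s r hsr (htop ▸ hs))

lemma eqvGen_sharesCut_of_top_eq {x y : Fin m} {P Q : separationDomain G} (htop : P.1 0 = Q.1 0)
    (hP : Prefers P.1 x y) (hQ : Prefers Q.1 x y) :
    Relation.EqvGen (SharesCut x y) P Q := by
  have hPx := isUpper_upperContour P.1 x
  have hQx := isUpper_upperContour Q.1 x
  set W := upperContour P.1 x ∪ upperContour Q.1 x with hWdef
  have hPW : P.1 0 ∈ W := mem_union_left _ (top_mem_upperContour _ _)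
  have hW : SeparatorClosed G (P.1 0) W :=
    (hPx.separatorClosed P.2).union (htop ▸ hQx.separatorClosed Q.2)
  have hxW : x ∈ W := mem_union_left _ (self_mem_upperContour _ _)
  have hyW : y ∉ W := by simpa [hWdef, notMem_upperContour] using ⟨hP, hQ⟩
  let P' : separationDomain G := ⟨_, moveToFront_mem_separationDomain P.2 hPW hW⟩
  let Q' : separationDomain G :=
    ⟨_, moveToFront_mem_separationDomain Q.2 (htop ▸ hPW) (htop ▸ hW)⟩
  have hPP' : SharesCut x y P P' := ⟨_, self_mem_upperContour _ _, notMem_upperContour.2 hP, hPx,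
    hPx.moveToFront (.inl subset_union_left)⟩
  have hP'Q' : SharesCut x y P' Q' :=
    ⟨W, hxW, hyW, isUpper_moveToFront _ _, isUpper_moveToFront _ _⟩
  have hQQ' : SharesCut x y Q Q' := ⟨_, self_mem_upperContour _ _, notMem_upperContour.2 hQ, hQx,
    hQx.moveToFront (.inl subset_union_right)⟩
  exact .trans _ _ _ (.rel _ _ hPP') (.trans _ _ _ (.rel _ _ hP'Q') (.symm _ _ (.rel _ _ hQQ')))

lemma exists_eqvGen_sharesCut_of_adj {x y c : Fin m} {P : separationDomain G}
    (hP : Prefers P.1 x y) (hc : G.Adj (P.1 0) c) (hcy : c ≠ y) :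
    ∃ Q : separationDomain G, Q.1 0 = c ∧ Prefers Q.1 x y ∧
      Relation.EqvGen (SharesCut x y) P Q := by
  have hPx := isUpper_upperContour P.1 x
  set W := upperContour P.1 x ∪ {P.1 0, c} with hWdef
  have hPW : P.1 0 ∈ W := mem_union_left _ (top_mem_upperContour _ _)
  have hW : SeparatorClosed G (P.1 0) W :=
    (hPx.separatorClosed P.2).union (separatorClosed_pair hc)
  have hxW : x ∈ W := mem_union_left _ (self_mem_upperContour _ _)
  have hyW : y ∉ W := by
    simpa [hWdef, notMem_upperContour, hP, hcy.symm] using hP.ne_top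
  let R : separationDomain G := ⟨_, moveToFront_mem_separationDomain P.2 hPW hW⟩
  have hRtop : R.1 0 = P.1 0 := moveToFront_top hPW
  have hR : IsUpper R.1 W := isUpper_moveToFront _ _
  let Q : separationDomain G :=
    ⟨_, moveToFront_singleton_mem_separationDomain R.2 (hRtop ▸ hc)⟩
  have hQ : IsUpper Q.1 W := hR.moveToFront (.inr (by simp [hWdef]))
  have hPR : SharesCut x y P R := ⟨_, self_mem_upperContour _ _, notMem_upperContour.2 hP, hPx,
    hPx.moveToFront (.inl subset_union_left)⟩
  exact ⟨Q, moveToFront_singleton_top _ _, hQ x hxW y hyW,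
    .trans _ _ _ (.rel _ _ hPR) (.rel _ _ ⟨W, hxW, hyW, hR, hQ⟩)⟩

lemma exists_eqvGen_sharesCut_of_walk {x y c : Fin m} (w : G.Walk c x) (hw : y ∉ w.support)
    {P : separationDomain G} (htop : P.1 0 = c) (hP : Prefers P.1 x y) :
    ∃ Q : separationDomain G, Q.1 0 = x ∧ Prefers Q.1 x y ∧
      Relation.EqvGen (SharesCut x y) P Q := by
  induction w generalizing P with
  | nil => exact ⟨P, htop, hP, .refl P⟩
  | cons hadj w ih =>
    obtain ⟨-, hw⟩ : y ≠ _ ∧ y ∉ w.support := by simpa using hw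
    obtain ⟨R, hRtop, hR, hPR⟩ := exists_eqvGen_sharesCut_of_adj hP (htop ▸ hadj)
      (ne_of_mem_of_not_mem w.start_mem_support hw)
    obtain ⟨Q, hQtop, hQ, hRQ⟩ := ih hw hRtop hR
    exact ⟨Q, hQtop, hQ, .trans _ _ _ hPR hRQ⟩

/-- If `P` prefers `x` to `y` then `y` does not separate the top of `P` from `x`, so the top can be
moved to `x` along a walk avoiding `y`. -/
lemma pairConnected_separationDomain (G : SimpleGraph (Fin m)) :
    PairConnected (separationDomain G) := by
  have hconnect_top (x y : Fin m) (P : separationDomain G) (hP : Prefers P.1 x y) :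
      ∃ Q : separationDomain G, Q.1 0 = x ∧ Prefers Q.1 x y ∧
        Relation.EqvGen (SharesCut x y) P Q := by
    obtain ⟨w, hw⟩ : ∃ w : G.Walk (P.1 0) x, y ∉ w.support := by
      by_contra! hsep
      exact hP.asymm (P.2 y x hP.ne.symm hsep)
    exact exists_eqvGen_sharesCut_of_walk w hw rfl hP
  intro x y P Q hP hQ
  obtain ⟨P', hPtop, hP', hPP'⟩ := hconnect_top x y P hP
  obtain ⟨Q', hQtop, hQ', hQQ'⟩ := hconnect_top x y Q hQ
  exact .trans _ _ _ hPP' (.trans _ _ _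
    (eqvGen_sharesCut_of_top_eq (hPtop.trans hQtop.symm) hP' hQ') (.symm _ _ hQQ'))

lemma eq_of_topOf_eq_of_forall_isSwap {X : Type*} {f : separationDomain G → X}
    (hf : ∀ {A B : separationDomain G} {x y : Fin m},
      IsSwap A.1 B.1 x y → topOf A = topOf B → f A = f B)
    {A B : separationDomain G} (htop : topOf A = topOf B) : f A = f B := by
  induction hs : inversions A.1 B.1 using Finset.strongInduction generalizing A with
  | H s ih =>
    by_cases hAB : A = B
    · rw [hAB]
    obtain ⟨x, y, A', hswap, hB⟩ := exists_isSwap_of_ne (Subtype.coe_ne_coe.2 hAB)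
    obtain ⟨hA', hA'top⟩ := mem_separationDomain_of_between (C := A') A.2 B.2 htop
      fun u v hA hBuv => by
        refine (hswap.2.2 u v ?_ ?_).1 hA
        · rintro ⟨rfl, rfl⟩
          exact hB.asymm hBuv
        · rintro ⟨rfl, rfl⟩
          exact hswap.1.asymm hA
    calc f A = f ⟨A', hA'⟩ := hf hswap hA'top.symm
      _ = f B := ih _ (hs ▸ hswap.inversions_ssubset hB) (hA'top.trans htop) rfl

theorem Unanimous.topsOnly_separationDomain {φ : Profile (separationDomain G) n → Lottery m}
    (hu : Unanimous φ) (hsp : StrategyProof φ) : TopsOnly φ := fun _ _ htop =>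
  rel_of_forall_rel_update Eq (R := fun d d' => topOf d = topOf d') (fun P i d hd => by
    simpa using eq_of_topOf_eq_of_forall_isSwap (f := fun d => φ (Function.update P i d))
      (fun hswap htop => hu.update_eq_of_isSwap hsp (pairConnected_separationDomain G) hswap
        htop P i) hd) htop

lemma minimallyRich_separationDomain (hG : G.Preconnected) :
    MinimallyRich (separationDomain G) := by
  intro a
  have hinj : Function.Injective fun z : Fin m => toLex (G.dist a z, z) :=
    fun _ _ h => congrArg Prod.snd (toLex.injective h)
  have hpref {s r : Fin m} (h : G.dist a s < G.dist a r) :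
      Prefers (prefOf fun z : Fin m => toLex (G.dist a z, z)) s r :=
    (prefers_prefOf hinj s r).2 (Prod.Lex.toLex_lt_toLex.2 (.inl h))
  have htop : prefOf (fun z : Fin m => toLex (G.dist a z, z)) 0 = a :=
    (top_eq_iff _ _).2 fun b hb => hpref (by
      simpa using (hG a b).pos_dist_of_ne hb.symm)
  refine ⟨_, fun s r hsr hs => hpref ?_, htop⟩
  rw [htop] at hs
  obtain ⟨w, hw⟩ := (hG a r).exists_walk_length_eq_dist
  calc G.dist a s ≤ (w.takeUntil s (hs w)).length := SimpleGraph.dist_le _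
    _ < w.length := w.length_takeUntil_lt_length (hs w) hsr
    _ = G.dist a r := hw

/-- `U` contains every separator between two of its members. -/
def SeparationConvex {V : Type*} (G : SimpleGraph V) (U : Finset V) : Prop :=
  ∀ a ∈ U, SeparatorClosed G a U

lemma SeparationConvex.exists_isUpper (hG : G.Preconnected) {U : Finset (Fin m)}
    (hU : SeparationConvex G U) {a : Fin m} (ha : a ∈ U) :
    ∃ d : separationDomain G, topOf d = a ∧ IsUpper d.1 U := by
  obtain ⟨P, hP, rfl⟩ := minimallyRich_separationDomain hG a
  exact ⟨⟨_, moveToFront_mem_separationDomain hP ha (hU _ ha)⟩, moveToFront_top ha,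
    isUpper_moveToFront _ _⟩

end SeparationDomain

/-! ### Hybrid preferences -/

/-- The path `a_1 – a_2 – ⋯ – a_m` with all chords inside `[a_p, a_q]` added. -/
def hybridGraph (p q : Fin m) : SimpleGraph (Fin m) :=
  SimpleGraph.hasse (Fin m) ⊔ SimpleGraph.fromRel fun a b => a ∈ Icc p q ∧ b ∈ Icc p q

section HybridGraph

variable {p q : Fin m}

lemma hybridGraph_adj_of_mem_Icc {a b : Fin m} (hab : a ≠ b) (ha : a ∈ Icc p q)
    (hb : b ∈ Icc p q) : (hybridGraph p q).Adj a b :=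
  .inr ((SimpleGraph.fromRel_adj _ _ _).2 ⟨hab, .inl ⟨ha, hb⟩⟩)

lemma hybridGraph_adj_of_covBy {a b : Fin m} (hab : a ⋖ b) : (hybridGraph p q).Adj a b :=
  .inl (.inl hab)

lemma exists_hybridGraph_walk_support_subset_Icc (p q : Fin m) {a b : Fin m} (hab : a ≤ b) :
    ∃ w : (hybridGraph p q).Walk a b, ∀ x ∈ w.support, x ∈ Icc a b := by
  induction hab using Succ.rec with
  | rfl => exact ⟨.nil, by simp⟩
  | succ b hab ih =>
    obtain ⟨w, hw⟩ := ih
    by_cases hmax : IsMax b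
    · exact ⟨w.copy rfl hmax.succ_eq.symm, by simpa [hmax.succ_eq] using hw⟩
    · refine ⟨w.concat (hybridGraph_adj_of_covBy (Order.covBy_succ_of_not_isMax hmax)),
        fun x hx => ?_⟩
      rw [SimpleGraph.Walk.support_concat] at hx
      have := Order.le_succ b
      grind

lemma preconnected_hybridGraph (p q : Fin m) : (hybridGraph p q).Preconnected := by
  intro a b
  obtain hab | hba := le_total a b
  · exact (exists_hybridGraph_walk_support_subset_Icc p q hab).choose.reachable
  · exact (exists_hybridGraph_walk_support_subset_Icc p q hba).choose.reachable.symm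

lemma le_of_hybridGraph_adj {s a b : Fin m} (hs : s ≤ p ∨ q ≤ s)
    (hab : (hybridGraph p q).Adj a b) (ha : a < s) : b ≤ s := by
  simp only [hybridGraph, SimpleGraph.sup_adj, SimpleGraph.hasse_adj, SimpleGraph.fromRel_adj,
    mem_Icc] at hab
  obtain (hcov | hcov) | ⟨-, h⟩ := hab
  · exact hcov.ge_of_gt ha
  · exact (hcov.lt.trans ha).le
  · grind

lemma separates_hybridGraph_of_lt_of_lt {s a r : Fin m} (hs : s ≤ p ∨ q ≤ s) (has : a < s)
    (hsr : s < r) : Separates (hybridGraph p q) s a r := by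
  intro w
  induction w with
  | nil => exact absurd has hsr.asymm
  | cons hadj w ih =>
    rw [SimpleGraph.Walk.support_cons]
    refine List.mem_cons_of_mem _ ?_
    obtain rfl | hlt := (le_of_hybridGraph_adj hs hadj has).eq_or_lt
    exacts [w.start_mem_support, ih hlt hsr]

lemma not_separates_hybridGraph_of_mem_Ioo {s a r : Fin m} (hs : s ∈ Ioo p q) (has : a < s)
    (hsr : s < r) : ¬ Separates (hybridGraph p q) s a r := by
  rw [mem_Ioo] at hs
  obtain ⟨u, hu⟩ := exists_hybridGraph_walk_support_subset_Icc p q (le_max_left a p)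
  obtain ⟨v, hv⟩ := exists_hybridGraph_walk_support_subset_Icc p q (min_le_left r q)
  have hchord : (hybridGraph p q).Adj (max a p) (min r q) := by
    refine hybridGraph_adj_of_mem_Icc ?_ ?_ ?_ <;> grind
  intro hsep
  have hmem := hsep (u.append (.cons hchord v))
  rw [SimpleGraph.Walk.mem_support_append_iff, SimpleGraph.Walk.support_cons, List.mem_cons] at hmem
  grind

lemma separates_hybridGraph_iff {s a r : Fin m} (hsa : s ≠ a) (hsr : s ≠ r) :
    Separates (hybridGraph p q) s a r ↔
      (s ≤ p ∨ q ≤ s) ∧ (a < s ∧ s < r ∨ r < s ∧ s < a) := by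
  wlog har : a ≤ r generalizing a r
  · rw [or_comm (a := a < s ∧ s < r), ← this hsr hsa (not_le.1 har).le]
    exact ⟨Separates.symm, Separates.symm⟩
  constructor
  · intro h
    obtain ⟨w, hw⟩ := exists_hybridGraph_walk_support_subset_Icc p q har
    have hs := mem_Icc.1 (hw s (h w))
    have has := lt_of_le_of_ne' hs.1 hsa
    have hsr := lt_of_le_of_ne hs.2 hsr
    refine ⟨?_, .inl ⟨has, hsr⟩⟩
    by_contra! hIoo
    exact not_separates_hybridGraph_of_mem_Ioo (mem_Ioo.2 hIoo) has hsr h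
  · rintro ⟨hs, ⟨has, hsr⟩ | ⟨hrs, hsa⟩⟩
    exacts [separates_hybridGraph_of_lt_of_lt hs has hsr,
      (separates_hybridGraph_of_lt_of_lt hs hrs hsa).symm]

lemma separationConvex_of_ordConnected {U : Finset (Fin m)} (hU : (U : Set (Fin m)).OrdConnected) :
    SeparationConvex (hybridGraph p q) U := by
  intro a ha r hr s hs
  obtain rfl | hsa := eq_or_ne s a
  · exact ha
  obtain rfl | hsr := eq_or_ne s r
  · exact hr
  obtain ⟨-, ⟨has, hsr⟩ | ⟨hrs, hsa⟩⟩ := (separates_hybridGraph_iff hsa hsr).1 hs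
  exacts [hU.out ha hr ⟨has.le, hsr.le⟩, hU.out hr ha ⟨hrs.le, hsa.le⟩]

lemma separationConvex_thresholds (hpq : p < q) : SeparationConvex (hybridGraph p q) {p, q} := by
  have hadj : (hybridGraph p q).Adj p q := hybridGraph_adj_of_mem_Icc hpq.ne
    (left_mem_Icc.2 hpq.le) (right_mem_Icc.2 hpq.le)
  intro a ha
  obtain rfl | rfl : a = p ∨ a = q := by simpa using ha
  · exact separatorClosed_pair hadj
  · rw [pair_comm]
    exact separatorClosed_pair hadj.symm

end HybridGraph

section HybridDomain

variable [NeZero m] {p q : Fin m}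

lemma IsHybridPref.prefers_left (hpq : p < q) {P : Pref m} (hP : IsHybridPref p q P)
    (htop : P 0 ≤ p) {r : Fin m} (hr : p < r) : Prefers P p r := by
  obtain ⟨hpeaked, hleft, -⟩ := hP
  obtain hrq | hqr := le_or_gt r q
  · exact hleft htop r hr.le hrq hr.ne'
  · exact (hleft htop q hpq.le le_rfl hpq.ne').trans
      (hpeaked r q (.inr ⟨hqr.le, le_rfl⟩) (.inr ⟨htop.trans_lt hpq, hqr⟩))

lemma IsHybridPref.prefers_right (hpq : p < q) {P : Pref m} (hP : IsHybridPref p q P)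
    (htop : q ≤ P 0) {r : Fin m} (hr : r < q) : Prefers P q r := by
  obtain ⟨hpeaked, -, hright⟩ := hP
  obtain hpr | hrp := le_or_gt p r
  · exact hright htop r hpr hr.le hr.ne
  · exact (hright htop p le_rfl hpq.le hpq.ne).trans
      (hpeaked r p (.inl ⟨hrp.le, le_rfl⟩) (.inl ⟨hrp, hpq.trans_le htop⟩))

lemma mem_hybridDomain_iff (hpq : p < q) {P : Pref m} : P ∈ hybridDomain p q ↔
    ∀ s r, (s ≤ p ∨ q ≤ s) → (P 0 < s ∧ s < r ∨ r < s ∧ s < P 0) → Prefers P s r := by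
  constructor
  · rintro hP s r (hs | hs) (⟨hts, hsr⟩ | ⟨hrs, hst⟩)
    · obtain hrp | hpr := le_or_gt r p
      · exact hP.1 r s (.inl ⟨hrp, hs⟩) (.inr ⟨hts, hsr⟩)
      obtain rfl | hsp := hs.eq_or_lt
      · exact hP.prefers_left hpq hts.le hpr
      · exact (hP.1 p s (.inl ⟨le_rfl, hs⟩) (.inr ⟨hts, hsp⟩)).trans
          (hP.prefers_left hpq (hts.trans hsp).le hpr)
    · exact hP.1 r s (.inl ⟨hrs.le.trans hs, hs⟩) (.inl ⟨hrs, hst⟩)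
    · exact hP.1 r s (.inr ⟨hs.trans hsr.le, hs⟩) (.inr ⟨hts, hsr⟩)
    · obtain hqr | hrq := le_or_gt q r
      · exact hP.1 r s (.inr ⟨hqr, hs⟩) (.inl ⟨hrs, hst⟩)
      obtain rfl | hqs := hs.eq_or_lt
      · exact hP.prefers_right hpq hst.le hrq
      · exact (hP.1 q s (.inr ⟨le_rfl, hs⟩) (.inl ⟨hqs, hst⟩)).trans
          (hP.prefers_right hpq (hqs.trans hst).le hrq)
  · refine fun h => ⟨fun r s hrs hbetween => ?_, fun htop l hpl _ hne => ?_,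
      fun htop l _ hlq hne => ?_⟩
    · exact h s r (hrs.imp And.right And.right) hbetween.symm
    · obtain htop | htop := htop.eq_or_lt
      · exact htop ▸ prefers_top P (htop ▸ hne)
      · exact h p l (.inl le_rfl) (.inl ⟨htop, lt_of_le_of_ne' hpl hne⟩)
    · obtain htop | htop := htop.eq_or_lt
      · exact htop ▸ prefers_top P (htop ▸ hne)
      · exact h q l (.inr le_rfl) (.inr ⟨lt_of_le_of_ne hlq hne, htop⟩)

theorem hybridDomain_eq_separationDomain (hpq : p < q) :
    hybridDomain p q = separationDomain (hybridGraph p q) := by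
  ext P
  rw [mem_hybridDomain_iff hpq]
  constructor
  · intro h s r hsr hs
    obtain rfl | hst := eq_or_ne s (P 0)
    · exact prefers_top P hsr.symm
    · obtain ⟨hs, hbetween⟩ := (separates_hybridGraph_iff hst hsr).1 hs
      exact h s r hs hbetween
  · intro h s r hs hbetween
    have hst : s ≠ P 0 := by grind
    have hsr : s ≠ r := by grind
    exact h s r hsr ((separates_hybridGraph_iff hst hsr).2 ⟨hs, hbetween⟩)

end HybridDomain

/-! ### Rules that depend on the tops only -/

lemma TopsOnly.exists_eq_comp_topOf [NeZero m] {D : Set (Pref m)} (hD : MinimallyRich D)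
    {φ : Profile D n → Lottery m} (hφ : TopsOnly φ) :
    ∃ ψ : (Fin n → Fin m) → Lottery m, ∀ P, φ P = ψ fun i => topOf (P i) := by
  choose d hdD hdtop using hD
  exact ⟨fun t => φ fun i => ⟨d (t i), hdD (t i)⟩, fun P => hφ _ _ fun i => (hdtop _).symm⟩

lemma Unanimous.apply_const_eq [NeZero m] {D : Set (Pref m)} (hD : MinimallyRich D)
    {φ : Profile D n → Lottery m} (hu : Unanimous φ) {ψ : (Fin n → Fin m) → Lottery m}
    (hψ : ∀ P, φ P = ψ fun i => topOf (P i)) (a : Fin m) : ψ (fun _ => a) = degLottery a := by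
  obtain ⟨P, hP, rfl⟩ := hD a
  exact (hψ fun _ => ⟨P, hP⟩).symm.trans (hu _ _ fun _ => rfl)

/-- Moving votes into `U` never lowers the probability of `U`. -/
def VoteMonotone (ψ : (Fin n → Fin m) → Lottery m) (U : Finset (Fin m)) : Prop :=
  ∀ t t' : Fin n → Fin m, (∀ i, t i = t' i ∨ t' i ∈ U) → (ψ t).prob U ≤ (ψ t').prob U

/-- The voting rule is vote-monotone on every interval of alternatives. -/
def IntervalMonotone (ψ : (Fin n → Fin m) → Lottery m) : Prop :=
  ∀ U : Finset (Fin m), (U : Set (Fin m)).OrdConnected → VoteMonotone ψ U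

lemma StrategyProof.voteMonotone [NeZero m] {D : Set (Pref m)} {φ : Profile D n → Lottery m}
    (hsp : StrategyProof φ) (hD : MinimallyRich D) {ψ : (Fin n → Fin m) → Lottery m}
    (hψ : ∀ P, φ P = ψ fun i => topOf (P i)) {U : Finset (Fin m)}
    (hU : ∀ a ∈ U, ∃ d : D, topOf d = a ∧ IsUpper d.1 U) : VoteMonotone ψ U := by
  intro t t' h
  refine rel_of_forall_rel_update (· ≤ ·) (F := fun t => (ψ t).prob U)
    (R := fun a b => a = b ∨ b ∈ U) (fun t i b hb => ?_) h
  obtain rfl | hb := hb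
  · simp
  choose d hdD hdtop using hD
  obtain ⟨e, rfl, he⟩ := hU b hb
  let P : Profile D n := fun j => ⟨d (t j), hdD (t j)⟩
  have hdtop' (j : Fin n) : topOf (P j) = t j := hdtop (t j)
  have hP : φ P = ψ t := (hψ P).trans (congrArg ψ (funext hdtop'))
  have hPe : φ (Function.update P i e) = ψ (Function.update t i (topOf e)) := by
    refine (hψ _).trans (congrArg ψ (funext fun j => ?_))
    obtain rfl | hj := eq_or_ne j i
    · simp
    · simpa [hj] using hdtop' j
  simpa [hP, hPe] using hsp.prob_update_le (Function.update P i e) i (P i) (by simpa using he)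

section VoteMonotone

variable {ψ : (Fin n → Fin m) → Lottery m} {U : Finset (Fin m)} {t t' : Fin n → Fin m}

lemma VoteMonotone.prob_eq (hU : VoteMonotone ψ U)
    (h : ∀ i, t i = t' i ∨ t i ∈ U ∧ t' i ∈ U) : (ψ t).prob U = (ψ t').prob U :=
  le_antisymm (hU t t' fun i => (h i).imp_right And.right)
    (hU t' t fun i => (h i).imp Eq.symm And.left)

lemma VoteMonotone.prob_eq_of_mem_iff (hU : VoteMonotone ψ U) (hUc : VoteMonotone ψ Uᶜ)
    (h : ∀ i, t i ∈ U ↔ t' i ∈ U) : (ψ t).prob U = (ψ t').prob U := by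
  let s (i : Fin n) : Fin m := if t i ∈ U then t' i else t i
  have hts : (ψ t).prob U = (ψ s).prob U := hU.prob_eq fun i => by grind
  have hst' : (ψ s).prob Uᶜ = (ψ t').prob Uᶜ := hUc.prob_eq fun i => by
    grind [mem_compl]
  rw [Lottery.prob_compl, Lottery.prob_compl] at hst'
  linarith

lemma VoteMonotone.prob_eq_one [NeZero n] (hU : VoteMonotone ψ U)
    (hunan : ∀ a, ψ (fun _ => a) = degLottery a) (ht : ∀ i, t i ∈ U) : (ψ t).prob U = 1 := by
  rw [hU.prob_eq (t' := fun _ => t 0) fun i => .inr ⟨ht i, ht 0⟩, hunan, prob_degLottery,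
    if_pos (ht 0)]

lemma IntervalMonotone.prob_Ici_eq (hψ : IntervalMonotone ψ) {k : Fin m}
    (h : ∀ i, k ≤ t i ↔ k ≤ t' i) : (ψ t).prob (Ici k) = (ψ t').prob (Ici k) := by
  refine (hψ _ ?_).prob_eq_of_mem_iff (hψ _ ?_) (by simpa using h)
  · rw [coe_Ici]
    exact Set.ordConnected_Ici
  · rw [coe_compl, coe_Ici, Set.compl_Ici]
    exact Set.ordConnected_Iio

end VoteMonotone

/-! ### Probabilistic ballots -/

/-- The ballot `β_S`: the outcome when the voters in `S` vote for `a_m` and all others for `a_1`. -/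
def ballot [NeZero m] (ψ : (Fin n → Fin m) → Lottery m) (S : Finset (Fin n)) : Lottery m :=
  ψ (S.piecewise (fun _ => lastAlt m) fun _ => 0)

lemma le_lastAlt [NeZero m] (a : Fin m) : a ≤ lastAlt m := Nat.le_sub_one_of_lt a.isLt

lemma upSet_eq_Ici (k : Fin m) : upSet k = Ici k := filter_le_eq_Ici

lemma downSet_eq_Iic (k : Fin m) : downSet k = Iic k := filter_ge_eq_Iic

section Ballot

variable [NeZero m] {ψ : (Fin n → Fin m) → Lottery m}

lemma ballot_univ (hunan : ∀ a, ψ (fun _ => a) = degLottery a) :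
    ballot ψ univ = degLottery (lastAlt m) := by
  rw [ballot, piecewise_univ, hunan]

lemma ballot_empty (hunan : ∀ a, ψ (fun _ => a) = degLottery a) :
    ballot ψ ∅ = degLottery 0 := by
  rw [ballot, piecewise_empty, hunan]

lemma IntervalMonotone.ballotMonotone (hψ : IntervalMonotone ψ) : BallotMonotone (ballot ψ) := by
  intro S T hST k
  rw [upSet_eq_Ici]
  refine hψ _ (by simpa using Set.ordConnected_Ici) _ _ fun i => ?_
  by_cases hT : i ∈ T
  · exact .inr (by simpa [hT] using le_lastAlt k)
  · simp [hT, notMem_mono hST.subset hT]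

lemma IntervalMonotone.prob_Ici_eq_ballot (hψ : IntervalMonotone ψ) {t : Fin n → Fin m} {k : Fin m}
    {S : Finset (Fin n)} (hS : ∀ i, i ∈ S ↔ k ≤ t i) :
    (ψ t).prob (Ici k) = (ballot ψ S).prob (Ici k) := by
  refine hψ.prob_Ici_eq fun i => ?_
  by_cases hi : i ∈ S
  · simpa [hi, le_lastAlt] using (hS i).1 hi
  · have hlt : t i < k := not_le.1 fun h => hi ((hS i).2 h)
    simp [hi, hlt, ((Fin.zero_le _).trans_lt hlt).ne']

variable {D : Set (Pref m)} {φ : Profile D n → Lottery m}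

lemma IntervalMonotone.tailProb_ballot (hψ : IntervalMonotone ψ)
    (hφ : ∀ P, φ P = ψ fun i => topOf (P i)) (P : Profile D n) (k : Fin m) :
    tailProb (ballot ψ) P k = (φ P).prob (Ici k) := by
  rw [tailProb, dif_pos k.isLt, upSet_eq_Ici, hφ]
  exact (hψ.prob_Ici_eq_ballot fun i => by simp [voterSet]).symm

lemma IntervalMonotone.tailProb_ballot_succ (hψ : IntervalMonotone ψ)
    (hφ : ∀ P, φ P = ψ fun i => topOf (P i)) (P : Profile D n) (k : Fin m) :
    tailProb (ballot ψ) P (k + 1) = (φ P).prob (Ioi k) := by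
  by_cases hk : (k : ℕ) + 1 < m
  · have hIoi : Ioi k = Ici ⟨k + 1, hk⟩ := by
      ext a
      rw [mem_Ioi, mem_Ici, Fin.lt_def, Fin.le_def, Nat.succ_le_iff]
    rw [hIoi]
    exact hψ.tailProb_ballot hφ P ⟨k + 1, hk⟩
  · have hIoi : Ioi k = ∅ := by
      ext a
      have := a.isLt
      simp only [mem_Ioi, Fin.lt_def, notMem_empty, iff_false]
      omega
    rw [tailProb, dif_neg hk, hIoi, Lottery.prob, sum_empty]

theorem isPFBRWith_ballot (hφ : ∀ P, φ P = ψ fun i => topOf (P i)) (hψ : IntervalMonotone ψ)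
    (hunan : ∀ a, ψ (fun _ => a) = degLottery a) : IsPFBRWith φ (ballot ψ) := by
  refine ⟨⟨ballot_univ hunan, ballot_empty hunan⟩, hψ.ballotMonotone, fun P k => ?_⟩
  rw [hψ.tailProb_ballot hφ, hψ.tailProb_ballot_succ hφ, ← Ici_erase,
    Lottery.prob_erase _ (by simp)]
  ring

end Ballot

/-! ### The constrained random dictatorship -/

lemma Lottery.prob_nonneg (lam : Lottery m) (U : Finset (Fin m)) : 0 ≤ lam.prob U :=
  sum_nonneg fun a _ => lam.2.1 a

lemma Lottery.prob_inter_of_prob_eq_one {lam : Lottery m} {W : Finset (Fin m)}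
    (hW : lam.prob W = 1) (U : Finset (Fin m)) : lam.prob (U ∩ W) = lam.prob U := by
  have hsplit : lam.prob (U ∩ W) + lam.prob (U \ W) = lam.prob U := sum_inter_add_sum_sdiff U W _
  have hle : lam.prob (U \ W) ≤ lam.prob Wᶜ :=
    sum_le_sum_of_subset_of_nonneg (fun a ha => by
      grind [mem_compl]) fun a _ _ => lam.2.1 a
  have hnonneg := lam.prob_nonneg (U \ W)
  rw [Lottery.prob_compl, hW] at hle
  linarith

section ConstrainedRD

variable {ψ : (Fin n → Fin m) → Lottery m} {p c q : Fin m}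

lemma Lottery.prob_Iic_of_covBy (hpc : p ⋖ c) (lam : Lottery m) :
    lam.prob (Iic p) = 1 - lam.prob (Ici c) := by
  rw [← Lottery.prob_compl]
  congr 1
  ext a
  simp [hpc.lt_iff_le_left]

lemma IntervalMonotone.prob_thresholds [NeZero n] (hψ : IntervalMonotone ψ)
    (hunan : ∀ a, ψ (fun _ => a) = degLottery a) (hpc : p ⋖ c) (hcq : c < q)
    {t : Fin n → Fin m} (ht : ∀ i, t i ∈ Icc p q) :
    (ψ t).prob {p, q} = 1 - (ψ t).prob (Ici c) + (ψ t).prob (Ici q) := by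
  have hpq := hpc.lt.trans hcq
  have hIcc : (ψ t).prob (Icc p q) = 1 :=
    (hψ _ (by simpa using Set.ordConnected_Icc)).prob_eq_one hunan ht
  have hinter : (Iic p ∪ Ici q) ∩ Icc p q = {p, q} := by
    ext a
    simp only [mem_inter, mem_union, mem_Iic, mem_Ici, mem_Icc, mem_insert, mem_singleton]
    grind
  have hdisj : Disjoint (Iic p) (Ici q) := disjoint_left.2 fun a ha ha' =>
    (hpq.trans_le (mem_Ici.1 ha')).not_ge (mem_Iic.1 ha)
  calc (ψ t).prob {p, q} = (ψ t).prob (Iic p ∪ Ici q) := by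
        rw [← hinter, Lottery.prob_inter_of_prob_eq_one hIcc]
    _ = (ψ t).prob (Iic p) + (ψ t).prob (Ici q) := sum_union hdisj
    _ = 1 - (ψ t).prob (Ici c) + (ψ t).prob (Ici q) := by rw [Lottery.prob_Iic_of_covBy hpc]

variable [NeZero m]

lemma prob_ballot_empty_Ici (hunan : ∀ a, ψ (fun _ => a) = degLottery a) {k : Fin m}
    (hk : 0 < k) : (ballot ψ ∅).prob (Ici k) = 0 := by
  rw [ballot_empty hunan, prob_degLottery, if_neg (by simpa using hk.ne')]

/-- Let `S` vote for `q`, `T` for `c`, and the others for `p`. Moving the votes of `S` to `p`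
preserves the total probability of `p` and `q`. -/
lemma prob_ballot_union_Ici [NeZero n] (hψ : IntervalMonotone ψ)
    (hunan : ∀ a, ψ (fun _ => a) = degLottery a) (hthresholds : VoteMonotone ψ {p, q})
    (hpc : p ⋖ c) (hcq : c < q) {S T : Finset (Fin n)} (hST : Disjoint S T) :
    (ballot ψ (S ∪ T)).prob (Ici c) = (ballot ψ S).prob (Ici q) + (ballot ψ T).prob (Ici c) := by
  have hlt := hpc.lt
  have hpq := hlt.trans hcq
  have hST' := disjoint_left.1 hST
  let t' (i : Fin n) : Fin m := if i ∈ T then c else p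
  let t (i : Fin n) : Fin m := if i ∈ S then q else t' i
  have htt' : (ψ t).prob {p, q} = (ψ t').prob {p, q} := hthresholds.prob_eq fun i => by grind
  have ht := hψ.prob_thresholds hunan hpc hcq (t := t) fun i => by grind
  have ht' := hψ.prob_thresholds hunan hpc hcq (t := t') fun i => by grind
  have htc := hψ.prob_Ici_eq_ballot (t := t) (k := c) (S := S ∪ T) fun i => by grind
  have htq := hψ.prob_Ici_eq_ballot (t := t) (k := q) (S := S) fun i => by grind
  have htc' := hψ.prob_Ici_eq_ballot (t := t') (k := c) (S := T) fun i => by grind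
  have htq' := hψ.prob_Ici_eq_ballot (t := t') (k := q) (S := ∅) fun i => by grind
  rw [prob_ballot_empty_Ici hunan ((Fin.zero_le p).trans_lt hpq)] at htq'
  linarith

theorem constrainedRD_ballot [NeZero n] (hψ : IntervalMonotone ψ)
    (hunan : ∀ a, ψ (fun _ => a) = degLottery a) (hthresholds : VoteMonotone ψ {p, q})
    (hpc : p ⋖ c) (hcq : c < q) : ConstrainedRD p q (ballot ψ) := by
  set μ : Finset (Fin n) → ℝ := fun S => (ballot ψ S).prob (Ici q) with hμ
  have hempty : (ballot ψ ∅).prob (Ici c) = 0 :=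
    prob_ballot_empty_Ici hunan ((Fin.zero_le p).trans_lt hpc.lt)
  have hmiddle (S : Finset (Fin n)) : (ballot ψ S).prob (Ici c) = μ S := by
    simpa [hempty] using prob_ballot_union_Ici hψ hunan hthresholds hpc hcq (disjoint_empty_right S)
  have hunion {S T : Finset (Fin n)} (hST : Disjoint S T) : μ (S ∪ T) = μ S + μ T := by
    rw [← hmiddle, prob_ballot_union_Ici hψ hunan hthresholds hpc hcq hST, hmiddle]
  have hsum (S : Finset (Fin n)) : μ S = ∑ i ∈ S, μ {i} := by
    induction S using Finset.induction_on with
    | empty => rw [sum_empty, ← hmiddle, hempty]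
    | insert i S hi ih => rw [insert_eq, hunion (by simpa using hi), sum_union (by simpa using hi),
        sum_singleton, ih]
  have huniv : ∑ i, μ {i} = 1 := by
    rw [← hsum, hμ]
    simp [ballot_univ hunan, prob_degLottery, le_lastAlt]
  refine ⟨fun i => μ {i}, fun i => Lottery.prob_nonneg _ _, huniv, fun S => ⟨?_, ?_⟩⟩
  · rw [upSet_eq_Ici]
    exact hsum S
  · rw [downSet_eq_Iic, Lottery.prob_Iic_of_covBy hpc, hmiddle, hsum, ← huniv, sub_eq_iff_eq_add,
      sum_compl_add_sum]

end ConstrainedRD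

end PFBRPaper

/-- Every unanimous and strategy-proof RSCF on the full `(p,q)`-hybrid
domain (`q - p > 1`) is a `(p,q)`-PFBR. -/
theorem unanimous_strategyproof_is_pfbr (m n : ℕ) [NeZero m] (hm : 3 ≤ m) (hn : 2 ≤ n)
    (p q : Fin m) (hgap : (p : ℕ) + 1 < (q : ℕ))
    (φ : Profile (hybridDomain p q) n → Lottery m)
    (hu : Unanimous φ) (hsp : StrategyProof φ) :
    ∃ β, IsPFBRWith φ β ∧ ConstrainedRD p q β := by
  have : NeZero n := ⟨by omega⟩
  have hpq : p < q := Nat.lt_of_succ_lt hgap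
  let c : Fin m := ⟨p + 1, hgap.trans q.isLt⟩
  have hpc : p ⋖ c := ⟨Nat.lt_succ_self p, fun a hpa hac => hpa.not_ge (Nat.le_of_lt_succ hac)⟩
  have hcq : c < q := hgap
  revert φ
  rw [hybridDomain_eq_separationDomain hpq]
  intro φ hu hsp
  have hconn := preconnected_hybridGraph p q
  have hrich := minimallyRich_separationDomain hconn
  obtain ⟨ψ, hψ⟩ := (hu.topsOnly_separationDomain hsp).exists_eq_comp_topOf hrich
  have hunan := hu.apply_const_eq hrich hψ
  have hmono {U : Finset (Fin m)} (hU : SeparationConvex (hybridGraph p q) U) :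
      VoteMonotone ψ U :=
    hsp.voteMonotone hrich hψ fun a => hU.exists_isUpper hconn
  have hinterval : IntervalMonotone ψ := fun U hU => hmono (separationConvex_of_ordConnected hU)
  exact ⟨ballot ψ, isPFBRWith_ballot hψ hinterval hunan,
    constrainedRD_ballot hinterval hunan (hmono (separationConvex_thresholds hpq)) hpc hcq⟩
end
end

section
/- If D is a minimally rich no-restoration domain of preferences over A, then the graph G_≈^A(D) is connected: for any two distinct alternatives a_s, a_t ∈ A there exists a vertex-path of G_≈^A(D) connecting a_s and a_t. -/
open Finset

noncomputable section

open PFBRPaper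

/-!
Swapping two contiguous alternatives leaves the top of a preference alone, unless the swap is at the
first two ranks, and then the old and the new top are strongly connected by definition. So the tops
along a path of adjacent preferences trace a walk of the strong-connection graph, with pauses;
cutting out its cycles gives a vertex-path.
-/

namespace PFBRPaper

variable {m : ℕ} {D : Set (Pref m)} {P P' : Pref m} {a b : Fin m}

/-- The property that any two distinct preferences of `D` are connected by a path in `D`; unlike in
`NoRestorationDomain`, the path may restore pairs of alternatives. -/
def AdjacencyConnected (D : Set (Pref m)) : Prop :=
  D.Pairwise fun P P' => ∃ π v, IsPath D P P' π v

theorem NoRestorationDomain.adjacencyConnected (hD : NoRestorationDomain D) :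
    AdjacencyConnected D := by
  intro P hP P' hP' hne
  obtain ⟨a, -⟩ := DFunLike.ne_iff.mp hne
  obtain ⟨π, v, hπ, -⟩ := hD P hP P' hP' hne a a
  exact ⟨π, v, hπ⟩

variable [NeZero m]

/-- The alternatives that are top-ranked by some preference of `D`. -/
def tops (D : Set (Pref m)) : Set (Fin m) := {a | ∃ P ∈ D, P 0 = a}

theorem MinimallyRich.tops_eq_univ (hD : MinimallyRich D) : tops D = Set.univ :=
  Set.eq_univ_of_forall hD

theorem StronglyConnected.symm (h : StronglyConnected D a b) : StronglyConnected D b a := by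
  obtain ⟨hne, P, hP, P', hP', h₀, h₁, h₀', h₁', htail⟩ := h
  exact ⟨hne.symm, P', hP', P, hP, h₀', h₁', h₀, h₁, fun k hk => (htail k hk).symm⟩

theorem StronglyConnected.right_mem_tops (h : StronglyConnected D a b) : b ∈ tops D := by
  obtain ⟨-, -, -, P', hP', -, -, h₀', -⟩ := h
  exact ⟨P', hP', h₀'⟩

/-- The graph `G_≈^A(D)` on all alternatives. Alternatives outside `tops D` are isolated in it, so
its walks starting in `tops D` are also walks of `G_≈^{tops D}(D)`. -/
def strongConnectionGraph (D : Set (Pref m)) : SimpleGraph (Fin m) where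
  Adj := StronglyConnected D
  symm := ⟨fun _ _ => StronglyConnected.symm⟩
  loopless := ⟨fun _ h => h.1 rfl⟩

theorem mem_tops_of_reachable (ha : a ∈ tops D) (hab : (strongConnectionGraph D).Reachable a b) :
    b ∈ tops D := by
  rw [SimpleGraph.reachable_iff_reflTransGen] at hab
  rcases hab.cases_tail with rfl | ⟨c, -, hcb⟩
  · exact ha
  · exact StronglyConnected.right_mem_tops hcb

theorem exists_vertexPathBetween_of_reachable (ha : a ∈ tops D)
    (hab : (strongConnectionGraph D).Reachable a b) :
    ∃ l, VertexPathBetween D (tops D) a b l := by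
  obtain ⟨w, hw⟩ := hab.exists_isPath
  have support_subset : ∀ x ∈ w.support, x ∈ tops D := fun x hx =>
    mem_tops_of_reachable ha (w.takeUntil x hx).reachable
  refine ⟨w.support, ⟨w.support_ne_nil, hw.support_nodup, support_subset,
    w.isChain_adj_support⟩, ?_, ?_⟩
  · rw [List.head?_eq_some_head w.support_ne_nil, w.head_support]
  · rw [List.getLast?_eq_some_getLast w.support_ne_nil, w.getLast_support]

theorem Adjacent.top_eq_or_stronglyConnected (h : Adjacent P P') (hP : P ∈ D) (hP' : P' ∈ D) :
    P 0 = P' 0 ∨ StronglyConnected D (P 0) (P' 0) := by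
  obtain ⟨-, k, hk, hdown, hup, hrest⟩ := h
  rcases k.eq_zero_or_pos with rfl | hkpos
  · have hone : (⟨0 + 1, hk⟩ : Fin m) = 1 := Fin.ext (Nat.mod_eq_of_lt hk).symm
    have hzero : (⟨0, Nat.lt_of_succ_lt hk⟩ : Fin m) = 0 := rfl
    have hne : (0 : Fin m) ≠ 1 := Fin.ne_of_val_ne (by rw [← hone]; exact Nat.zero_ne_one)
    rw [hone, hzero] at hdown hup
    refine .inr ⟨?_, P, hP, P', hP', rfl, hup, rfl, hdown.symm, fun l hl =>
      hrest l (by lia) (by lia)⟩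
    rw [← hup]
    exact P.injective.ne hne
  · exact .inl (hrest 0 hkpos.ne (Nat.succ_pos k).ne)

theorem IsPath.reachable_top {π : ℕ → Pref m} {v : ℕ} (h : IsPath D P P' π v) :
    (strongConnectionGraph D).Reachable (P 0) (P' 0) := by
  obtain ⟨hv, hmem, -, rfl, rfl, hadj⟩ := h
  have reachable_prefix : ∀ i < v, (strongConnectionGraph D).Reachable (π 0 0) (π i 0) := by
    intro i hi
    induction i with
    | zero => rfl
    | succ i ih =>
      have hi' : i < v := Nat.lt_of_succ_lt hi
      rcases (hadj i hi).top_eq_or_stronglyConnected (hmem i hi') (hmem (i + 1) hi) with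
        heq | hconn
      · exact heq ▸ ih hi'
      · exact (ih hi').trans (SimpleGraph.Adj.reachable hconn)
  exact reachable_prefix (v - 1) (Nat.sub_one_lt_of_lt hv)

theorem AdjacencyConnected.reachable_top (hD : AdjacencyConnected D) (hP : P ∈ D) (hP' : P' ∈ D) :
    (strongConnectionGraph D).Reachable (P 0) (P' 0) := by
  rcases eq_or_ne P P' with rfl | hne
  · rfl
  · obtain ⟨π, v, hπ⟩ := hD hP hP' hne
    exact hπ.reachable_top

end PFBRPaper

theorem graph_connected_general {m : ℕ} [NeZero m] {D : Set (Pref m)} (hD : AdjacencyConnected D)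
    {a b : Fin m} (ha : a ∈ tops D) (hb : b ∈ tops D) :
    ∃ l, VertexPathBetween D (tops D) a b l := by
  obtain ⟨P, hP, rfl⟩ := ha
  obtain ⟨P', hP', rfl⟩ := hb
  exact exists_vertexPathBetween_of_reachable ⟨P, hP, rfl⟩ (hD.reachable_top hP hP')

/-- For a minimally rich no-restoration domain, the graph `G_≈^A(D)` is
connected. -/
theorem graph_connected (m : ℕ) [NeZero m] (hm : 3 ≤ m)
    (D : Set (Pref m)) (hmr : MinimallyRich D) (hnr : NoRestorationDomain D) :
    ∀ a b : Fin m, a ≠ b → ∃ l, VertexPathBetween D Set.univ a b l := by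
  intro a b _
  exact hmr.tops_eq_univ ▸ graph_connected_general hnr.adjacencyConnected (hmr a) (hmr b)
end
end
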